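/- For all x, y, z ∈ 𝓡, (x ⊕ y) ⊕ z ∼ x ⊕ (y ⊕ z). -/

import Mathlib

/-- The ambient space `𝓡` of decimal representations: an integer part together
with a sequence of digits in `{0,…,9}`. -/
abbrev DecimalRep := ℤ × (ℕ → Fin 10)

namespace DecimalRep

open scoped Classical

/-- The truncation `[x]_k = x₀ + ∑_{i=1}^k x_i / 10^i` of `x` up to the `k`-th
digit, as a rational number. -/
def trunc (x : DecimalRep) (k : ℕ) : ℚ :=
  (x.1 : ℚ) + ∑ i ∈ Finset.range k, ((x.2 i : ℕ) : ℚ) / 10 ^ (i + 1)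

/-- The order `⪯` on `𝓡`: `x ⪯ y` iff every truncation of `x` is at most the
corresponding truncation of `y`. -/
def le (x y : DecimalRep) : Prop := ∀ k : ℕ, trunc x k ≤ trunc y k

/-- The strict order `≺` on `𝓡`. -/
def lt (x y : DecimalRep) : Prop := le x y ∧ x ≠ y

/-- Two decimal representations are equivalent ("have no gap") iff there is no
third element lying between them. -/
def equiv (x y : DecimalRep) : Prop :=
  ¬ ∃ z : DecimalRep, z ≠ x ∧ z ≠ y ∧
      ((le x z ∧ le z y) ∨ (le y z ∧ le z x))

/-- `𝓡₉`: decimal representations ending in an infinite string of nines. -/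
def allNines (x : DecimalRep) : Prop := ∃ N : ℕ, ∀ k ≥ N, x.2 k = 9

/-- `ℚ_F`: decimal representations ending in an infinite string of zeros. -/
def finiteDec (x : DecimalRep) : Prop := ∃ N : ℕ, ∀ k ≥ N, x.2 k = 0

/-- The decimal expansion map `ι : ℚ → 𝓡`, satisfying
`[ι(α)]_k = ⌊10^k·α⌋/10^k` for all `k`. -/
def iota (α : ℚ) : DecimalRep :=
  (⌊α⌋, fun k => ⟨(⌊α * 10 ^ (k + 1)⌋ % 10).toNat, by
    have h1 : (0 : ℤ) ≤ ⌊α * 10 ^ (k + 1)⌋ % 10 := Int.emod_nonneg _ (by norm_num)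
    have h2 : ⌊α * 10 ^ (k + 1)⌋ % 10 < 10 := Int.emod_lt_of_pos _ (by norm_num)
    omega⟩)

/-- `M` is a least upper bound of `W` in `(𝓡,⪯)`. -/
def IsLub (W : Set DecimalRep) (M : DecimalRep) : Prop :=
  (∀ w ∈ W, le w M) ∧ ∀ M' : DecimalRep, (∀ w ∈ W, le w M') → le M M'

/-- `M` is a greatest lower bound of `W` in `(𝓡,⪯)`. -/
def IsGlb (W : Set DecimalRep) (M : DecimalRep) : Prop :=
  (∀ w ∈ W, le M w) ∧ ∀ M' : DecimalRep, (∀ w ∈ W, le M' w) → le M' M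

/-- The least upper bound of a set in `(𝓡,⪯)` (junk value if none exists). -/
noncomputable def sup (W : Set DecimalRep) : DecimalRep :=
  if h : ∃ M, IsLub W M then h.choose else default

/-- The greatest lower bound of a set in `(𝓡,⪯)` (junk value if none exists). -/
noncomputable def inf (W : Set DecimalRep) : DecimalRep :=
  if h : ∃ M, IsGlb W M then h.choose else default

/-- Addition `x ⊕ y := sup {ι([x]_k + [y]_k) : k ∈ ℕ}` on `𝓡`. -/
noncomputable def add (x y : DecimalRep) : DecimalRep :=
  sup { z | ∃ k : ℕ, z = iota (trunc x k + trunc y k) }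

/-- The "additive inverse" map `Ψ(x₀.x₁x₂⋯) = (−1−x₀).(9−x₁)(9−x₂)⋯`. -/
def psi (x : DecimalRep) : DecimalRep :=
  (-1 - x.1, fun k => ⟨9 - (x.2 k).val, by have := (x.2 k).isLt; omega⟩)

/-- The signal map: `0` on the nonnegative part, `1` on the negative part. -/
noncomputable def sign (x : DecimalRep) : ℕ :=
  if le (iota 0) x then 0 else 1

/-- The absolute value `‖x‖ := max {x, Ψ(x)}` with respect to `⪯`. -/
noncomputable def norm (x : DecimalRep) : DecimalRep :=
  if le x (psi x) then psi x else x

/-- Multiplication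
`x ⊗ y := Ψ^(sign x + sign y) (sup {ι([‖x‖]_k · [‖y‖]_k) : k ∈ ℕ})` on `𝓡`. -/
noncomputable def mul (x y : DecimalRep) : DecimalRep :=
  psi^[sign x + sign y]
    (sup { z | ∃ k : ℕ, z = iota (trunc (norm x) k * trunc (norm y) k) })

/-- The multiplicative inverse
`x⁻¹ := Ψ^(sign x) (inf {ι(1/[‖x‖]_k) : k ∈ ℕ, [‖x‖]_k > 0})`. -/
noncomputable def inv (x : DecimalRep) : DecimalRep :=
  psi^[sign x]
    (inf { z | ∃ k : ℕ, 0 < trunc (norm x) k ∧ z = iota (1 / trunc (norm x) k) })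

/-- A sequence of rationals is Cauchy. -/
def IsCauchy (x : ℕ → ℚ) : Prop :=
  ∀ ε : ℚ, 0 < ε → ∃ N : ℕ, ∀ m n : ℕ, N ≤ m → N ≤ n → |x m - x n| < ε

/-- The upper limit `inf { sup {f k : k ≥ n} : n ∈ ℕ }` of a sequence in `𝓡`. -/
noncomputable def upperLimit (f : ℕ → DecimalRep) : DecimalRep :=
  inf { z | ∃ n : ℕ, z = sup { w | ∃ k : ℕ, n ≤ k ∧ w = f k } }

/-- The lower limit `sup { inf {f k : k ≥ n} : n ∈ ℕ }` of a sequence in `𝓡`. -/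
noncomputable def lowerLimit (f : ℕ → DecimalRep) : DecimalRep :=
  sup { z | ∃ n : ℕ, z = inf { w | ∃ k : ℕ, n ≤ k ∧ w = f k } }

end DecimalRep

namespace DecimalRep

lemma trunc_zero' (x : DecimalRep) : trunc x 0 = x.1 := by simp [trunc]

lemma trunc_succ' (x : DecimalRep) (k : ℕ) :
    trunc x (k+1) = trunc x k + ((x.2 k : ℕ) : ℚ) / 10 ^ (k + 1) := by
  simp [trunc, Finset.sum_range_succ, add_assoc]

lemma trunc_mono (x : DecimalRep) : Monotone (trunc x) := by
  refine monotone_nat_of_le_succ fun k => ?_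
  rw [trunc_succ']
  have : (0:ℚ) ≤ ((x.2 k : ℕ) : ℚ) / 10 ^ (k + 1) := by positivity
  linarith

lemma trunc_anti (x : DecimalRep) : Antitone (fun k => trunc x k + 1 / 10 ^ k) := by
  refine antitone_nat_of_succ_le fun k => ?_
  show trunc x (k+1) + 1 / 10 ^ (k+1) ≤ trunc x k + 1 / 10 ^ k
  rw [trunc_succ']
  have h : ((x.2 k : ℕ) : ℚ) ≤ 9 := by
    have := (x.2 k).isLt
    exact_mod_cast (by omega : (x.2 k : ℕ) ≤ 9)
  have h2 : ((x.2 k : ℕ) : ℚ) / 10 ^ (k + 1) ≤ 9 / 10 ^ (k+1) := by gcongr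
  have h3 : (1:ℚ) / 10 ^ k = 9 / 10 ^ (k+1) + 1 / 10 ^ (k+1) := by
    rw [pow_succ]; field_simp; norm_num
  linarith

lemma trunc_int (x : DecimalRep) (k : ℕ) : ∃ n : ℤ, trunc x k = n / 10 ^ k := by
  induction k with
  | zero => exact ⟨x.1, by simp [trunc_zero']⟩
  | succ k ih =>
    obtain ⟨n, hn⟩ := ih
    refine ⟨10 * n + ((x.2 k : ℕ) : ℤ), ?_⟩
    rw [trunc_succ', hn, pow_succ]
    push_cast
    field_simp

lemma trunc_inj (x y : DecimalRep) (h : ∀ k, trunc x k = trunc y k) : x = y := by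
  refine Prod.ext ?_ ?_
  · have := h 0
    rw [trunc_zero', trunc_zero'] at this
    exact_mod_cast this
  · funext k
    have h1 := h (k+1)
    rw [trunc_succ', trunc_succ', h k] at h1
    have h2 : ((x.2 k : ℕ) : ℚ) / 10 ^ (k + 1) = ((y.2 k : ℕ) : ℚ) / 10 ^ (k + 1) := by linarith
    rw [div_left_inj' (by positivity)] at h2
    exact Fin.ext (by exact_mod_cast h2)

lemma trunc_eq (x : DecimalRep) (N : ℕ → ℤ) (h0 : x.1 = N 0)
    (h : ∀ k, ((x.2 k : ℕ) : ℤ) = N (k+1) % 10) (hd : ∀ k, N k = N (k+1) / 10) (k : ℕ) :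
    trunc x k = N k / 10 ^ k := by
  induction k with
  | zero => simp [trunc_zero', h0]
  | succ k ih =>
    have h1 : N (k+1) = 10 * N k + ((x.2 k : ℕ) : ℤ) := by
      have := h k; have := hd k; omega
    rw [trunc_succ', ih, h1, pow_succ]
    push_cast
    field_simp

lemma floor_div (α : ℚ) (k : ℕ) : ⌊α * 10 ^ k⌋ = ⌊α * 10 ^ (k+1)⌋ / 10 := by
  have h := Int.floor_div_natCast (α * 10 ^ (k+1)) 10
  rw [pow_succ] at *
  push_cast at h
  rw [← h]
  congr 1
  field_simp

lemma trunc_iota (α : ℚ) (k : ℕ) : trunc (iota α) k = ⌊α * 10 ^ k⌋ / 10 ^ k := by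
  refine trunc_eq _ (fun k => ⌊α * 10 ^ k⌋) (by simp [iota]) (fun k => ?_) (floor_div α) k
  simp only [iota]
  exact Int.toNat_of_nonneg (Int.emod_nonneg _ (by norm_num))

lemma castle {a b : ℚ} {k : ℕ} (h : a ≤ b + 1 / 10 ^ k) : (a : ℝ) ≤ b + 1 / 10 ^ k := by
  have h := (Rat.cast_le (K := ℝ)).mpr h
  push_cast at h
  exact h

noncomputable def val (x : DecimalRep) : ℝ := ⨆ k, (trunc x k : ℝ)

lemma trunc_le_upper (x : DecimalRep) (j k : ℕ) : trunc x j ≤ trunc x k + 1 / 10 ^ k := by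
  have h1 := trunc_mono x (le_max_left j k)
  have h2 := trunc_anti x (le_max_right j k)
  have h3 : (0:ℚ) < 1 / 10 ^ (max j k) := by positivity
  simp only at h2
  linarith

lemma trunc_le_val (x : DecimalRep) (k : ℕ) : (trunc x k : ℝ) ≤ val x := by
  refine le_ciSup (f := fun k => (trunc x k : ℝ)) ⟨((trunc x 0 + 1 / 10 ^ 0 : ℚ) : ℝ), ?_⟩ k
  rintro _ ⟨j, rfl⟩
  exact Rat.cast_le.mpr (trunc_le_upper x j 0)

lemma val_le (x : DecimalRep) (k : ℕ) : val x ≤ trunc x k + 1 / 10 ^ k := by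
  refine ciSup_le fun j => ?_
  exact castle (trunc_le_upper x j k)

lemma val_mono {x y : DecimalRep} (h : le x y) : val x ≤ val y := by
  refine ciSup_le fun j => le_trans ?_ (trunc_le_val y j)
  exact_mod_cast h j

lemma key {a b : DecimalRep} (h : le a b) (hne : a ≠ b) (hv : val a = val b) :
    (∃ n, val b = trunc b n) ∧ ∀ m, (trunc a m : ℝ) ≠ val a := by
  obtain ⟨n, hn⟩ : ∃ n, trunc a n ≠ trunc b n := by
    by_contra! hc; exact hne (trunc_inj _ _ hc)
  have hlt := lt_of_le_of_ne (h n) hn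
  have hgap : trunc a n + 1 / 10 ^ n ≤ trunc b n := by
    obtain ⟨p, hp⟩ := trunc_int a n
    obtain ⟨q, hq⟩ := trunc_int b n
    rw [hp, hq] at hlt ⊢
    rw [div_lt_div_iff_of_pos_right (by positivity)] at hlt
    rw [← add_div]
    gcongr
    have : p + 1 ≤ q := by exact_mod_cast hlt
    exact_mod_cast this
  have hgapR : (trunc a n : ℝ) + 1 / 10 ^ n ≤ trunc b n := by
    have h := (Rat.cast_le (K := ℝ)).mpr hgap
    push_cast at h
    exact h
  have h1 := val_le a n
  have h2 := trunc_le_val b n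
  refine ⟨⟨n, by linarith⟩, fun m hm => ?_⟩
  have hva : (trunc a m : ℝ) = trunc a n + 1 / 10 ^ n := by linarith
  have hvq : trunc a m = trunc a n + 1 / 10 ^ n := by
    apply (Rat.cast_injective (α := ℝ))
    push_cast
    exact hva
  have g1 := trunc_mono a (le_max_left m n)
  have g2 := trunc_anti a (le_max_right m n)
  have g3 : (0:ℚ) < 1 / 10 ^ (max m n) := by positivity
  simp only at g2
  linarith

lemma equiv_of_val {a b : DecimalRep} (hv : val a = val b) : equiv a b := by
  have aux : ∀ {a b z : DecimalRep}, val a = val b → z ≠ a → z ≠ b → le a z → le z b → False := by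
    intro a b z hv h1 h2 h3 h4
    have e1 := val_mono h3
    have e2 := val_mono h4
    obtain ⟨⟨n, hn⟩, -⟩ := key h3 h1.symm (by linarith)
    exact (key h4 h2 (by linarith)).2 n hn.symm
  rintro ⟨z, h1, h2, ⟨h3, h4⟩ | ⟨h3, h4⟩⟩
  · exact aux hv h1 h2 h3 h4
  · exact aux hv.symm h2 h1 h3 h4

lemma exists_lub (q : ℕ → ℚ) (B : ℚ) (hB : ∀ j, q j ≤ B) :
    ∃ M, IsLub { z | ∃ k : ℕ, z = iota (q k) } M ∧ ∀ k, ∃ j, trunc M k ≤ q j := by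
  have hmax : ∀ k : ℕ, ∃ N : ℤ, (∃ j, ⌊q j * 10 ^ k⌋ = N) ∧ ∀ j, ⌊q j * 10 ^ k⌋ ≤ N := by
    intro k
    obtain ⟨N, h1, h2⟩ := Int.exists_greatest_of_bdd (P := fun N => ∃ j, ⌊q j * 10 ^ k⌋ = N)
      ⟨⌊B * 10 ^ k⌋, by
        rintro _ ⟨j, rfl⟩
        apply Int.floor_mono
        have := hB j
        gcongr⟩ ⟨_, 0, rfl⟩
    exact ⟨N, h1, fun j => h2 _ ⟨j, rfl⟩⟩
  choose N hN1 hN2 using hmax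
  have hd : ∀ k, N k = N (k+1) / 10 := by
    intro k
    apply le_antisymm
    · obtain ⟨j, hj⟩ := hN1 k
      rw [← hj, floor_div]
      exact Int.ediv_le_ediv (by norm_num) (hN2 (k+1) j)
    · obtain ⟨j, hj⟩ := hN1 (k+1)
      rw [← hj, ← floor_div]
      exact hN2 k j
  let M : DecimalRep := (N 0, fun k => ⟨(N (k+1) % 10).toNat, by omega⟩)
  have hM : ∀ k, trunc M k = N k / 10 ^ k := by
    refine trunc_eq M N rfl (fun k => ?_) hd
    exact Int.toNat_of_nonneg (Int.emod_nonneg _ (by norm_num))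
  refine ⟨M, ⟨?_, ?_⟩, ?_⟩
  · rintro _ ⟨j, rfl⟩ k
    rw [hM, trunc_iota]
    have := hN2 k j
    gcongr
  · intro M' h k
    obtain ⟨j, hj⟩ := hN1 k
    have := h _ ⟨j, rfl⟩ k
    rw [trunc_iota, hj] at this
    rwa [hM]
  · intro k
    obtain ⟨j, hj⟩ := hN1 k
    refine ⟨j, ?_⟩
    rw [hM, ← hj, div_le_iff₀ (by positivity)]
    exact Int.floor_le _

lemma eps {a b c : ℝ} (h : ∀ k : ℕ, a ≤ b + c * (1 / 10 ^ k)) : a ≤ b := by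
  have t : Filter.Tendsto (fun k : ℕ => b + c * (1 / 10 : ℝ) ^ k) Filter.atTop (nhds (b + c * 0)) :=
    ((tendsto_pow_atTop_nhds_zero_of_lt_one (by norm_num) (by norm_num)).const_mul c).const_add b
  have := ge_of_tendsto' t (b := a) (fun k => by have := h k; rwa [one_div_pow])
  linarith

lemma le_val_iota (α : ℚ) : (α : ℝ) ≤ val (iota α) := by
  refine eps (c := 1) fun k => ?_
  have h := trunc_le_val (iota α) k
  have h2 : α ≤ trunc (iota α) k + 1 / 10 ^ k := by
    rw [trunc_iota, ← add_div, le_div_iff₀ (by positivity)]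
    exact (Int.lt_floor_add_one _).le
  have h3 : (α : ℝ) ≤ trunc (iota α) k + 1 / 10 ^ k := castle h2
  linarith

lemma val_add (x y : DecimalRep) : val (add x y) = val x + val y := by
  obtain ⟨M, hM, hMq⟩ := exists_lub (fun k => trunc x k + trunc y k)
    ((trunc x 0 + 1 / 10 ^ 0) + (trunc y 0 + 1 / 10 ^ 0))
    (fun j => add_le_add (trunc_le_upper x j 0) (trunc_le_upper y j 0))
  have hs : IsLub { z | ∃ k : ℕ, z = iota (trunc x k + trunc y k) } (add x y) := by
    have hex : ∃ M, IsLub { z | ∃ k : ℕ, z = iota (trunc x k + trunc y k) } M := ⟨M, hM⟩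
    unfold add sup
    rw [dif_pos hex]
    exact hex.choose_spec
  apply le_antisymm
  · refine (val_mono (hs.2 M hM.1)).trans (ciSup_le fun k => ?_)
    obtain ⟨j, hj⟩ := hMq k
    have h1 : (trunc M k : ℝ) ≤ trunc x j + trunc y j := by exact_mod_cast hj
    have := trunc_le_val x j
    have := trunc_le_val y j
    linarith
  · refine eps (c := 2) fun k => ?_
    have h1 := (le_val_iota (trunc x k + trunc y k)).trans (val_mono (hs.1 _ ⟨k, rfl⟩))
    push_cast at h1
    have := val_le x k
    have := val_le y k
    linarith

end DecimalRep

open DecimalRep in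
/-- Addition on `𝓡` is associative up to equivalence. -/
theorem add_assoc_equiv (x y z : DecimalRep) :
    equiv (add (add x y) z) (add x (add y z)) := by
  apply equiv_of_val
  simp only [val_add]
  ring
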